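/- Form core approximation: for every smooth function u on the closed unit ball B̄ ⊂ ℝ^d, there exist u_n ∈ C_0^∞(B) with u_n → u in L²(B) such that the quadratic forms q(u_n,u_n) = ∫_B (1-|x|²)|∇u_n|² dx remain bounded in n. In particular, taking u = 1 and u_n(x) = h_n(|x|) with h_n ∈ C_0^∞(-1,1), h_n = 1 on [0, 1-1/n], |h_n'| ≤ 2n, one has ∫_B (1-|x|²)|∇u_n|² dx ≤ C for a constant C independent of n. -/

import Mathlib

open MeasureTheory Filter Topology
noncomputable section

/-- Euclidean space ℝ^d. -/
abbrev Ed (d : ℕ) := EuclideanSpace ℝ (Fin d)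

/-- Partial derivative ∂ᵢ of a complex-valued function. -/
def pd {d : ℕ} (i : Fin d) (f : Ed d → ℂ) (x : Ed d) : ℂ :=
  fderiv ℝ f x (EuclideanSpace.single i 1)

/-- Laplacian Δ = ∑ᵢ ∂ᵢ². -/
def lap {d : ℕ} (f : Ed d → ℂ) (x : Ed d) : ℂ := ∑ i, pd i (pd i f) x

/-- Radial derivative r∂ᵣ = ∑ᵢ xᵢ ∂ᵢ. -/
def rdr {d : ℕ} (f : Ed d → ℂ) (x : Ed d) : ℂ := ∑ i, (x i : ℂ) * pd i f x

/-- Legendre operator L f = ∇·((1-|x|²)∇f). -/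
def legendreOp {d : ℕ} (f : Ed d → ℂ) (x : Ed d) : ℂ :=
  ∑ i, pd i (fun y => ((1 - ‖y‖ ^ 2 : ℝ) : ℂ) * pd i f y) x

/-- Prolate operator W f = L f - |x|² f. -/
def prolateOp {d : ℕ} (f : Ed d → ℂ) (x : Ed d) : ℂ :=
  legendreOp f x - ((‖x‖ ^ 2 : ℝ) : ℂ) * f x

/-- Partial derivative ∂ᵢ of a real-valued function. -/
def pdR {d : ℕ} (i : Fin d) (f : Ed d → ℝ) (x : Ed d) : ℝ :=
  fderiv ℝ f x (EuclideanSpace.single i 1)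

/-- Legendre operator on real functions. -/
def legendreR {d : ℕ} (f : Ed d → ℝ) (x : Ed d) : ℝ :=
  ∑ i, pdR i (fun y => (1 - ‖y‖ ^ 2) * pdR i f y) x

/-! Cut `u` off in the boundary layer `1 - ε ≤ ‖x‖ < 1`. There the gradient of the cutoff is
`O(1 / ε)`, so its square costs `O(1 / ε²)`; the degenerate weight `1 - ‖x‖² ≤ 2ε` gains one power
of `ε` and the volume `O(ε)` of the layer gains the other. Hence the energy of the cutoff is bounded
uniformly in `ε`, while the modification of `u` is confined to a layer of vanishing volume. -/

open Metric Module

section LegendreForm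

variable {E F : Type*} [NormedAddCommGroup E]

theorem one_sub_norm_sq_nonneg_of_mem_ball {x : E} (hx : x ∈ ball (0 : E) 1) :
    0 ≤ 1 - ‖x‖ ^ 2 :=
  sub_nonneg.2 (pow_le_one₀ (norm_nonneg x) (mem_ball_zero_iff.1 hx).le)

variable [NormedSpace ℝ E] [NormedAddCommGroup F] [NormedSpace ℝ F]

/-- The density `(1 - |x|²) |∇u(x)|²` of the Legendre quadratic form. The gradient is encoded as the
Fréchet derivative, with its operator norm. -/
def legendreDensity (u : E → F) (x : E) : ℝ :=
  (1 - ‖x‖ ^ 2) * ‖fderiv ℝ u x‖ ^ 2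

/-- The Legendre quadratic form `q(u, u) = ∫_B (1 - |x|²) |∇u|² dμ` over the open unit ball. Its
value is `0` when the density is not integrable. -/
def legendreForm [MeasurableSpace E] (μ : Measure E) (u : E → F) : ℝ :=
  ∫ x in ball (0 : E) 1, legendreDensity u x ∂μ

theorem legendreDensity_nonneg (u : E → F) {x : E} (hx : x ∈ ball (0 : E) 1) :
    0 ≤ legendreDensity u x :=
  mul_nonneg (one_sub_norm_sq_nonneg_of_mem_ball hx) (sq_nonneg _)

theorem continuous_legendreDensity {u : E → F} {k : WithTop ℕ∞} (hu : ContDiff ℝ k u)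
    (hk : k ≠ 0) : Continuous (legendreDensity u) :=
  (continuous_const.sub (continuous_norm.pow 2)).mul ((hu.continuous_fderiv hk).norm.pow 2)

theorem legendreDensity_smul_le {χ : E → ℝ} {u : E → F} {M : ℝ} {x : E} (hx : x ∈ ball (0 : E) 1)
    (hχ : DifferentiableAt ℝ χ x) (hu : DifferentiableAt ℝ u x) (hχ_le : ‖χ x‖ ≤ 1)
    (hu_le : ‖u x‖ ≤ M) :
    legendreDensity (fun y => χ y • u y) x ≤
      2 * legendreDensity u x + 2 * M ^ 2 * legendreDensity χ x := by
  have h_weight := one_sub_norm_sq_nonneg_of_mem_ball hx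
  have h_norm : ‖fderiv ℝ (fun y => χ y • u y) x‖ ≤ 1 * ‖fderiv ℝ u x‖ + ‖fderiv ℝ χ x‖ * M := by
    rw [fderiv_fun_smul hχ hu]
    refine (norm_add_le _ _).trans ?_
    rw [norm_smul, ContinuousLinearMap.norm_smulRight_apply]
    gcongr
  calc (1 - ‖x‖ ^ 2) * ‖fderiv ℝ (fun y => χ y • u y) x‖ ^ 2
      ≤ (1 - ‖x‖ ^ 2) * (2 * ((1 * ‖fderiv ℝ u x‖) ^ 2 + (‖fderiv ℝ χ x‖ * M) ^ 2)) := by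
        gcongr
        exact (pow_le_pow_left₀ (norm_nonneg _) h_norm 2).trans add_sq_le
    _ = 2 * legendreDensity u x + 2 * M ^ 2 * legendreDensity χ x := by
        unfold legendreDensity; ring

variable [MeasurableSpace E] [OpensMeasurableSpace E] {μ : Measure E}

theorem integrableOn_legendreDensity [ProperSpace E] [IsFiniteMeasureOnCompacts μ] {u : E → F}
    {k : WithTop ℕ∞} (hu : ContDiff ℝ k u) (hk : k ≠ 0) :
    IntegrableOn (legendreDensity u) (ball (0 : E) 1) μ :=
  ((continuous_legendreDensity hu hk).continuousOn.integrableOn_compact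
    (isCompact_closedBall 0 1)).mono_set ball_subset_closedBall

theorem legendreForm_smul_le {χ : E → ℝ} {u : E → F} {M : ℝ}
    (hχ : DifferentiableOn ℝ χ (ball 0 1)) (hu : DifferentiableOn ℝ u (ball 0 1))
    (hχ_le : ∀ x ∈ ball (0 : E) 1, ‖χ x‖ ≤ 1) (hu_le : ∀ x ∈ ball (0 : E) 1, ‖u x‖ ≤ M)
    (hχ_int : IntegrableOn (legendreDensity χ) (ball (0 : E) 1) μ)
    (hu_int : IntegrableOn (legendreDensity u) (ball (0 : E) 1) μ) :
    legendreForm μ (fun x => χ x • u x) ≤ 2 * legendreForm μ u + 2 * M ^ 2 * legendreForm μ χ := by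
  have hu_int' := hu_int.const_mul 2
  have hχ_int' := hχ_int.const_mul (2 * M ^ 2)
  calc legendreForm μ (fun x => χ x • u x)
      ≤ ∫ x in ball (0 : E) 1, (2 * legendreDensity u x + 2 * M ^ 2 * legendreDensity χ x) ∂μ := by
        refine integral_mono_of_nonneg
          ((ae_restrict_mem measurableSet_ball).mono fun x => legendreDensity_nonneg _)
          (hu_int'.add hχ_int') ((ae_restrict_mem measurableSet_ball).mono fun x hx => ?_)
        have hx_nhds := isOpen_ball.mem_nhds hx
        exact legendreDensity_smul_le hx (hχ.differentiableAt hx_nhds)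
          (hu.differentiableAt hx_nhds) (hχ_le x hx) (hu_le x hx)
    _ = 2 * legendreForm μ u + 2 * M ^ 2 * legendreForm μ χ := by
        rw [integral_add hu_int' hχ_int', integral_const_mul, integral_const_mul, legendreForm,
          legendreForm]

end LegendreForm

section BoundaryLayer

variable {E : Type*} [NormedAddCommGroup E] [NormedSpace ℝ E] [FiniteDimensional ℝ E]
  [MeasurableSpace E] [BorelSpace E] {μ : Measure E} [μ.IsAddHaarMeasure]

theorem measureReal_unitBall_sdiff_ball_le (x : E) {ε : ℝ} (hε₀ : 0 ≤ ε) (hε₁ : ε < 1) :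
    μ.real (ball x 1 \ ball x (1 - ε)) ≤ finrank ℝ E * ε * μ.real (ball (0 : E) 1) := by
  have h_ball : μ.real (ball x (1 - ε)) = (1 - ε) ^ finrank ℝ E * μ.real (ball (0 : E) 1) := by
    rw [Measure.real, Measure.addHaar_ball_of_pos μ x (sub_pos.2 hε₁), ENNReal.toReal_mul,
      ENNReal.toReal_ofReal (pow_nonneg (sub_nonneg.2 hε₁.le) _), Measure.real]
  have h_bernoulli : 1 - finrank ℝ E * ε ≤ (1 - ε) ^ finrank ℝ E := by
    simpa [sub_eq_add_neg] using one_add_mul_le_pow (a := -ε) (by linarith) (finrank ℝ E)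
  rw [measureReal_sdiff (ball_subset_ball (by linarith)) measurableSet_ball
    measure_ball_lt_top.ne, h_ball, Measure.addHaar_real_ball_center]
  nlinarith [measureReal_nonneg (μ := μ) (s := ball (0 : E) 1)]

theorem setIntegral_unitBall_le_of_eq_zero_of_norm_le {f : E → ℝ} {ε b : ℝ} (hε₀ : 0 ≤ ε)
    (hε₁ : ε < 1) (hb : 0 ≤ b) (h_zero : ∀ x ∈ ball (0 : E) (1 - ε), f x = 0)
    (h_le : ∀ x ∈ ball (0 : E) 1 \ ball 0 (1 - ε), ‖f x‖ ≤ b) :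
    ∫ x in ball (0 : E) 1, f x ∂μ ≤ b * (finrank ℝ E * ε * μ.real (ball (0 : E) 1)) := by
  rw [setIntegral_eq_of_subset_of_forall_sdiff_eq_zero measurableSet_ball Set.sdiff_subset
    fun x hx => h_zero x (by_contra fun h => hx.2 ⟨hx.1, h⟩)]
  have h_fin : μ (ball (0 : E) 1 \ ball 0 (1 - ε)) < ⊤ :=
    (measure_mono Set.sdiff_subset).trans_lt measure_ball_lt_top
  refine (Real.le_norm_self _).trans ((norm_setIntegral_le_of_norm_le_const h_fin h_le).trans ?_)
  gcongr
  exact measureReal_unitBall_sdiff_ball_le 0 hε₀ hε₁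

end BoundaryLayer

section BallCutoff

variable {E F : Type*} [NormedAddCommGroup E]

/-- The radial cutoff of the open unit ball at scale `ε`: it vanishes where `1 - |x|² ≤ ε / 2` and
equals one where `1 - |x|² ≥ ε`, in particular for `|x| ≤ 1 - ε`. -/
def ballCutoff (ε : ℝ) (x : E) : ℝ :=
  Real.smoothTransition (2 / ε * (1 - ‖x‖ ^ 2) - 1)

theorem ballCutoff_nonneg (ε : ℝ) (x : E) : 0 ≤ ballCutoff ε x :=
  Real.smoothTransition.nonneg _

theorem ballCutoff_le_one (ε : ℝ) (x : E) : ballCutoff ε x ≤ 1 :=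
  Real.smoothTransition.le_one _

theorem ballCutoff_eq_one {ε : ℝ} (hε : 0 < ε) {x : E} (hx : x ∈ ball (0 : E) (1 - ε)) :
    ballCutoff ε x = 1 := by
  rw [mem_ball_zero_iff] at hx
  have h_weight : ε ≤ 1 - ‖x‖ ^ 2 := by nlinarith [norm_nonneg x]
  apply Real.smoothTransition.one_of_one_le
  calc (1 : ℝ) = 2 / ε * ε - 1 := by field_simp; norm_num
    _ ≤ 2 / ε * (1 - ‖x‖ ^ 2) - 1 := by gcongr

theorem tsupport_ballCutoff_subset {ε : ℝ} (hε : 0 < ε) :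
    tsupport (ballCutoff (E := E) ε) ⊆ ball 0 1 := by
  have h_closed : IsClosed {x : E | 1 ≤ 2 / ε * (1 - ‖x‖ ^ 2)} :=
    isClosed_le continuous_const (by fun_prop)
  have h_support : Function.support (ballCutoff ε) ⊆ {x : E | 1 ≤ 2 / ε * (1 - ‖x‖ ^ 2)} := by
    intro x hx
    contrapose! hx
    exact Function.notMem_support.2
      (Real.smoothTransition.zero_of_nonpos (sub_nonpos.2 (not_le.1 hx).le))
  intro x hx
  have h_arg : 1 ≤ 2 / ε * (1 - ‖x‖ ^ 2) := closure_minimal h_support h_closed hx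
  have h_weight : 0 < 1 - ‖x‖ ^ 2 := pos_of_mul_pos_right (one_pos.trans_le h_arg) (by positivity)
  exact mem_ball_zero_iff.2 ((sq_lt_one_iff₀ (norm_nonneg x)).1 (sub_pos.1 h_weight))

theorem norm_ballCutoff_smul_sub_le [NormedAddCommGroup F] [NormedSpace ℝ F] (ε : ℝ) (u : E → F)
    (x : E) : ‖ballCutoff ε x • u x - u x‖ ≤ ‖u x‖ := by
  have h_coeff : ‖ballCutoff ε x - 1‖ ≤ 1 :=
    abs_le.2 ⟨by linarith [ballCutoff_nonneg ε x], by linarith [ballCutoff_le_one ε x]⟩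
  calc ‖ballCutoff ε x • u x - u x‖ = ‖ballCutoff ε x - 1‖ * ‖u x‖ := by
        rw [← norm_smul, sub_smul, one_smul]
    _ ≤ ‖u x‖ := mul_le_of_le_one_left (norm_nonneg _) h_coeff

theorem exists_norm_deriv_smoothTransition_le :
    ∃ K : ℝ, ∀ t, ‖deriv Real.smoothTransition t‖ ≤ K := by
  have h_supp : HasCompactSupport (deriv Real.smoothTransition) := by
    refine HasCompactSupport.intro (isCompact_Icc (a := 0) (b := 1)) fun t ht => ?_
    rw [Set.mem_Icc, not_and_or, not_le, not_le] at ht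
    rcases ht with ht | ht
    · have h_zero : Real.smoothTransition =ᶠ[𝓝 t] fun _ => 0 := by
        filter_upwards [Iio_mem_nhds ht] with s hs using Real.smoothTransition.zero_of_nonpos hs.le
      rw [h_zero.deriv_eq, deriv_const]
    · have h_one : Real.smoothTransition =ᶠ[𝓝 t] fun _ => 1 := by
        filter_upwards [Ioi_mem_nhds ht] with s hs using Real.smoothTransition.one_of_one_le hs.le
      rw [h_one.deriv_eq, deriv_const]
  exact h_supp.exists_bound_of_continuous
    ((Real.smoothTransition.contDiff (n := 1)).continuous_deriv le_rfl)

variable [InnerProductSpace ℝ E]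

theorem contDiff_ballCutoff {k : ℕ∞} (ε : ℝ) : ContDiff ℝ k (ballCutoff (E := E) ε) :=
  Real.smoothTransition.contDiff.comp
    ((contDiff_const.mul (contDiff_const.sub (contDiff_norm_sq ℝ))).sub contDiff_const)

theorem fderiv_ballCutoff (ε : ℝ) (x : E) :
    fderiv ℝ (ballCutoff ε) x =
      (deriv Real.smoothTransition (2 / ε * (1 - ‖x‖ ^ 2) - 1) * (-(4 / ε))) • innerSL ℝ x := by
  have h_transition := ((Real.smoothTransition.contDiff (n := 1)).differentiable one_ne_zero
    (2 / ε * (1 - ‖x‖ ^ 2) - 1)).hasDerivAt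
  have h_arg := (((hasStrictFDerivAt_norm_sq x).hasFDerivAt.const_sub 1).const_mul
    (2 / ε)).sub_const 1
  refine (h_transition.comp_hasFDerivAt x h_arg).fderiv.trans ?_
  module

theorem exists_norm_fderiv_ballCutoff_le :
    ∃ K : ℝ, ∀ (ε : ℝ) (x : E), 0 < ε → ‖fderiv ℝ (ballCutoff ε) x‖ ≤ K / ε * ‖x‖ := by
  obtain ⟨K, hK⟩ := exists_norm_deriv_smoothTransition_le
  refine ⟨4 * K, fun ε x hε => ?_⟩
  rw [fderiv_ballCutoff, norm_smul, innerSL_apply_norm, norm_mul, norm_neg,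
    Real.norm_of_nonneg (by positivity : 0 ≤ 4 / ε)]
  calc ‖deriv Real.smoothTransition (2 / ε * (1 - ‖x‖ ^ 2) - 1)‖ * (4 / ε) * ‖x‖
      ≤ K * (4 / ε) * ‖x‖ := by gcongr; exact hK _
    _ = 4 * K / ε * ‖x‖ := by ring

theorem legendreDensity_ballCutoff_eq_zero {ε : ℝ} (hε : 0 < ε) {x : E}
    (hx : x ∈ ball (0 : E) (1 - ε)) : legendreDensity (ballCutoff ε) x = 0 := by
  have h_one : ballCutoff ε =ᶠ[𝓝 x] fun _ : E => (1 : ℝ) := by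
    filter_upwards [isOpen_ball.mem_nhds hx] with y hy using ballCutoff_eq_one hε hy
  simp [legendreDensity, h_one.fderiv_eq]

theorem exists_legendreDensity_ballCutoff_le :
    ∃ K : ℝ, 0 ≤ K ∧ ∀ ε : ℝ, 0 < ε → ∀ x ∈ ball (0 : E) 1 \ ball 0 (1 - ε),
      legendreDensity (ballCutoff ε) x ≤ K / ε := by
  obtain ⟨K, hK⟩ := exists_norm_fderiv_ballCutoff_le (E := E)
  refine ⟨2 * K ^ 2, by positivity, fun ε hε x ⟨hx, hxε⟩ => ?_⟩
  have h_nonneg := one_sub_norm_sq_nonneg_of_mem_ball hx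
  rw [mem_ball_zero_iff] at hx hxε
  have h_weight : 1 - ‖x‖ ^ 2 ≤ 2 * ε := by nlinarith [norm_nonneg x]
  calc (1 - ‖x‖ ^ 2) * ‖fderiv ℝ (ballCutoff ε) x‖ ^ 2
      ≤ 2 * ε * (K / ε * ‖x‖) ^ 2 := by gcongr; exact hK ε x hε
    _ = 2 * K ^ 2 / ε * ‖x‖ ^ 2 := by field_simp
    _ ≤ 2 * K ^ 2 / ε := mul_le_of_le_one_right (by positivity) (sub_nonneg.1 h_nonneg)

variable [FiniteDimensional ℝ E] [MeasurableSpace E] [BorelSpace E]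

theorem exists_legendreForm_ballCutoff_le (μ : Measure E) [μ.IsAddHaarMeasure] :
    ∃ C : ℝ, ∀ ε : ℝ, 0 < ε → ε < 1 → legendreForm μ (ballCutoff (E := E) ε) ≤ C := by
  obtain ⟨K, hK₀, hK⟩ := exists_legendreDensity_ballCutoff_le (E := E)
  refine ⟨K * (finrank ℝ E * μ.real (ball (0 : E) 1)), fun ε hε₀ hε₁ => ?_⟩
  calc legendreForm μ (ballCutoff (E := E) ε)
      ≤ K / ε * (finrank ℝ E * ε * μ.real (ball (0 : E) 1)) := by
        refine setIntegral_unitBall_le_of_eq_zero_of_norm_le hε₀.le hε₁ (by positivity)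
          (fun x => legendreDensity_ballCutoff_eq_zero hε₀) fun x hx => ?_
        rw [Real.norm_of_nonneg (legendreDensity_nonneg _ hx.1)]
        exact hK ε hε₀ x hx
    _ = K * (finrank ℝ E * μ.real (ball (0 : E) 1)) := by field_simp

variable [NormedAddCommGroup F] [NormedSpace ℝ F] {μ : Measure E} [μ.IsAddHaarMeasure]

theorem integral_norm_ballCutoff_smul_sub_sq_le {u : E → F} {M ε : ℝ}
    (hM : ∀ x ∈ ball (0 : E) 1, ‖u x‖ ≤ M) (hε₀ : 0 < ε) (hε₁ : ε < 1) :
    ∫ x in ball (0 : E) 1, ‖ballCutoff ε x • u x - u x‖ ^ 2 ∂μ ≤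
      M ^ 2 * (finrank ℝ E * ε * μ.real (ball (0 : E) 1)) := by
  refine setIntegral_unitBall_le_of_eq_zero_of_norm_le hε₀.le hε₁ (sq_nonneg M)
    (fun x hx => ?_) fun x hx => ?_
  · simp [ballCutoff_eq_one hε₀ hx]
  · rw [Real.norm_of_nonneg (sq_nonneg _)]
    gcongr
    exact (norm_ballCutoff_smul_sub_le ε u x).trans (hM x hx.1)

theorem legendreForm_ballCutoff_smul_le {u : E → F} {M : ℝ} (ε : ℝ)
    (hu : DifferentiableOn ℝ u (ball 0 1)) (hM : ∀ x ∈ ball (0 : E) 1, ‖u x‖ ≤ M)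
    (hu_int : IntegrableOn (legendreDensity u) (ball (0 : E) 1) μ) :
    legendreForm μ (fun x => ballCutoff ε x • u x) ≤
      2 * legendreForm μ u + 2 * M ^ 2 * legendreForm μ (ballCutoff (E := E) ε) := by
  have h_cutoff : ContDiff ℝ (1 : ℕ∞) (ballCutoff (E := E) ε) := contDiff_ballCutoff ε
  exact legendreForm_smul_le (h_cutoff.differentiable one_ne_zero).differentiableOn hu
    (fun x _ => (Real.norm_of_nonneg (ballCutoff_nonneg ε x)).trans_le (ballCutoff_le_one ε x)) hM
    (integrableOn_legendreDensity h_cutoff one_ne_zero) hu_int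

end BallCutoff

theorem contDiff_smul_of_tsupport_subset {E F : Type*} [NormedAddCommGroup E] [NormedSpace ℝ E]
    [NormedAddCommGroup F] [NormedSpace ℝ F] {χ : E → ℝ} {u : E → F} {s : Set E}
    {k : WithTop ℕ∞} (hs : IsOpen s) (hχ : ContDiff ℝ k χ) (hχs : tsupport χ ⊆ s)
    (hu : ContDiffOn ℝ k u s) : ContDiff ℝ k fun x => χ x • u x := by
  refine contDiff_iff_contDiffAt.2 fun x => ?_
  by_cases hx : x ∈ tsupport χ
  · exact hχ.contDiffAt.smul (hu.contDiffAt (hs.mem_nhds (hχs hx)))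
  · have h_zero : (fun y => χ y • u y) =ᶠ[𝓝 x] fun _ => 0 := by
      filter_upwards [notMem_tsupport_iff_eventuallyEq.1 hx] with y hy
      rw [hy, Pi.zero_apply, zero_smul]
    exact contDiffAt_const.congr_of_eventuallyEq h_zero

theorem form_core_approximation_general {E F : Type*} [NormedAddCommGroup E]
    [InnerProductSpace ℝ E] [FiniteDimensional ℝ E] [MeasurableSpace E] [BorelSpace E]
    [NormedAddCommGroup F] [NormedSpace ℝ F] (μ : Measure E) [μ.IsAddHaarMeasure] {k : ℕ∞}
    {u : E → F} (hk : k ≠ 0) (hu : ContDiffOn ℝ k u (ball 0 1))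
    (hu_bdd : ∃ M, ∀ x ∈ ball (0 : E) 1, ‖u x‖ ≤ M)
    (hu_int : IntegrableOn (legendreDensity u) (ball (0 : E) 1) μ) :
    ∃ v : ℕ → E → F,
      (∀ n, ContDiff ℝ k (v n) ∧ HasCompactSupport (v n) ∧ tsupport (v n) ⊆ ball 0 1) ∧
      Tendsto (fun n => ∫ x in ball (0 : E) 1, ‖v n x - u x‖ ^ 2 ∂μ) atTop (𝓝 0) ∧
      ∃ C, ∀ n, legendreForm μ (v n) ≤ C := by
  obtain ⟨M, hM⟩ := hu_bdd
  obtain ⟨C, hC⟩ := exists_legendreForm_ballCutoff_le μ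
  obtain ⟨ε, -, hε, hε_lim⟩ := exists_seq_strictAnti_tendsto' (zero_lt_one (α := ℝ))
  refine ⟨fun n x => ballCutoff (ε n) x • u x, fun n => ?_, ?_,
    2 * legendreForm μ u + 2 * M ^ 2 * C, fun n => ?_⟩
  · have h_cutoff := tsupport_ballCutoff_subset (E := E) (hε n).1
    have h_supp := (tsupport_smul_subset_left (ballCutoff (ε n)) u).trans h_cutoff
    exact ⟨contDiff_smul_of_tsupport_subset isOpen_ball (contDiff_ballCutoff _) h_cutoff hu,
      (isCompact_closedBall (0 : E) 1).of_isClosed_subset (isClosed_tsupport _)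
        (h_supp.trans ball_subset_closedBall), h_supp⟩
  · refine squeeze_zero (fun n => integral_nonneg fun x => sq_nonneg _)
      (fun n => integral_norm_ballCutoff_smul_sub_sq_le hM (hε n).1 (hε n).2) ?_
    simpa using ((hε_lim.const_mul (finrank ℝ E : ℝ)).mul_const (μ.real (ball (0 : E) 1))).const_mul
      (M ^ 2)
  · refine (legendreForm_ballCutoff_smul_le (ε n) (hu.differentiableOn (by simpa using hk)) hM
      hu_int).trans ?_
    gcongr
    exact hC _ (hε n).1 (hε n).2

theorem legendreForm_eq_integral_sum_pdR_sq {d : ℕ} (μ : Measure (Ed d)) (f : Ed d → ℝ) :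
    legendreForm μ f = ∫ x in ball (0 : Ed d) 1, (1 - ‖x‖ ^ 2) * ∑ i, pdR i f x ^ 2 ∂μ := by
  simp only [legendreForm, legendreDensity, pdR, (EuclideanSpace.basisFun (Fin d) ℝ).norm_dual,
    EuclideanSpace.basisFun_apply]

/-- Form core approximation: every smooth function on the closed unit ball is an
L²(B)-limit of test functions in C₀^∞(B) with bounded Legendre quadratic forms. -/
theorem form_core_approximation (d : ℕ) (u : Ed d → ℝ) (hu : ContDiff ℝ (⊤ : ℕ∞) u) :
    ∃ useq : ℕ → Ed d → ℝ,
      (∀ n, ContDiff ℝ (⊤ : ℕ∞) (useq n) ∧ HasCompactSupport (useq n) ∧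
        tsupport (useq n) ⊆ Metric.ball (0 : Ed d) 1) ∧
      Tendsto (fun n => ∫ x in Metric.ball (0 : Ed d) 1, (useq n x - u x) ^ 2)
        atTop (nhds 0) ∧
      ∃ C : ℝ, ∀ n, ∫ x in Metric.ball (0 : Ed d) 1,
          (1 - ‖x‖ ^ 2) * ∑ i, pdR i (useq n) x ^ 2 ≤ C := by
  have hu_bdd : ∃ M, ∀ x ∈ ball (0 : Ed d) 1, ‖u x‖ ≤ M :=
    ((isCompact_closedBall 0 1).exists_bound_of_continuousOn hu.continuous.continuousOn).imp
      fun _ hM x hx => hM x (ball_subset_closedBall hx)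
  simpa only [legendreForm_eq_integral_sum_pdR_sq, Real.norm_eq_abs, sq_abs] using
    form_core_approximation_general volume (by simp) hu.contDiffOn hu_bdd
      (integrableOn_legendreDensity hu (by simp))
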